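/- Let F be a field, let n ≥ 2 be an integer, and let a, b ∈ SL_n(F) be diagonal matrices each of whose n diagonal entries are pairwise distinct (i.e., a and b are split regular semisimple). Then every element g of SL_n(F) that is not in the center Z(SL_n(F)) can be written as g = (x a x⁻¹)(y b y⁻¹) for some x, y ∈ SL_n(F); that is, every noncentral element lies in the product of the conjugacy classes of a and b. -/

import Mathlib

/-!
Following Sourour, a nonscalar invertible matrix `A` with `det A = ∏ β * ∏ γ` is written as a
product of a conjugate of `diagonal β` and a conjugate of `diagonal γ`, by induction on the size.
Since `A` is nonscalar, some vector `v` is not an eigenvector; taking `v` and `A v - α v` as the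
first two basis vectors puts `α = β₀ γ₀` in the upper left corner. The block decomposition
`!![α, α r; c, c r + S] = !![β₀, 0; γ₀⁻¹ c, B] * !![γ₀, γ₀ r; 0, C]` then reduces the claim to a
factorization `S = B C` of the Schur complement, because a block triangular matrix whose diagonal
blocks have disjoint spectra is conjugate to its block diagonal part. If `S` happens to be scalar,
a further conjugation by a transvection makes it nonscalar.

Conjugacy under `GL` and under `SL` agree for these matrices, because the centralizer of a diagonal
matrix contains diagonal matrices of every determinant.
-/

open Matrix
open scoped Pointwise

section Conjugates

variable {M N : Type*} [Monoid M] [Monoid N] {a b x y : M}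

theorem mem_conjugatesOf_mul_of_isConj (h : IsConj x y)
    (hx : x ∈ conjugatesOf a * conjugatesOf b) : y ∈ conjugatesOf a * conjugatesOf b := by
  obtain ⟨u, hu⟩ := h
  obtain ⟨p, hp, q, hq, rfl⟩ := hx
  have conj_u (z : M) : IsConj z (u * z * ↑u⁻¹) := ⟨u, by simp [SemiconjBy, mul_assoc]⟩
  refine ⟨_, hp.trans (conj_u p), _, hq.trans (conj_u q), ?_⟩
  calc u * p * ↑u⁻¹ * (u * q * ↑u⁻¹) = u * (p * q) * ↑u⁻¹ := by simp [mul_assoc]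
    _ = y := by rw [hu.eq, Units.mul_inv_cancel_right]

theorem map_mem_conjugatesOf_mul (f : M →* N) (hx : x ∈ conjugatesOf a * conjugatesOf b) :
    f x ∈ conjugatesOf (f a) * conjugatesOf (f b) := by
  obtain ⟨p, hp, q, hq, rfl⟩ := hx
  exact ⟨f p, f.map_isConj hp, f q, f.map_isConj hq, (map_mul f p q).symm⟩

end Conjugates

section CommRing

variable {ι κ R : Type*} [Fintype ι] [DecidableEq ι] [Fintype κ] [DecidableEq κ] [CommRing R]

theorem det_eq_of_isConj {A B : Matrix ι ι R} (h : IsConj A B) : A.det = B.det :=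
  isConj_iff_eq.1 (detMonoidHom.map_isConj h)

theorem spectrum_eq_of_isConj {A B : Matrix ι ι R} (h : IsConj A B) :
    spectrum R A = spectrum R B := by
  obtain ⟨u, hu⟩ := h
  rw [← spectrum.units_conjugate (u := u), hu.eq, Units.mul_inv_cancel_right]

theorem isConj_fromBlocks_zero_zero {A A' : Matrix ι ι R} {D D' : Matrix κ κ R}
    (hA : IsConj A A') (hD : IsConj D D') :
    IsConj (fromBlocks A 0 0 D) (fromBlocks A' 0 0 D') := by
  obtain ⟨u, hu⟩ := hA
  obtain ⟨v, hv⟩ := hD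
  have huv : IsUnit (fromBlocks (u : Matrix ι ι R) 0 0 (v : Matrix κ κ R)) :=
    isUnit_fromBlocks_zero₁₂.2 ⟨u.isUnit, v.isUnit⟩
  exact ⟨huv.unit, by simp [SemiconjBy, fromBlocks_multiply, hu.eq, hv.eq]⟩

theorem isConj_fromBlocks_zero₁₂ {a : R} {D : Matrix κ κ R} (ha : a ∉ spectrum R D)
    (C : Matrix κ ι R) :
    IsConj (fromBlocks (a • (1 : Matrix ι ι R)) 0 0 D) (fromBlocks (a • 1) 0 C D) := by
  obtain ⟨u, hu⟩ := spectrum.notMem_iff.1 ha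
  obtain ⟨Y, hY⟩ : ∃ Y : Matrix κ ι R, (a • (1 : Matrix κ κ R) - D) * Y = C :=
    ⟨u⁻¹.val * C, by simp [← Algebra.algebraMap_eq_smul_one, ← hu, ← Matrix.mul_assoc]⟩
  have hunit : IsUnit (fromBlocks (1 : Matrix ι ι R) 0 Y (1 : Matrix κ κ R)) := by simp
  refine ⟨hunit.unit, ?_⟩
  simp [SemiconjBy, fromBlocks_multiply, ← hY, Matrix.sub_mul]

theorem isConj_fromBlocks_zero₂₁ {a : R} {D : Matrix κ κ R} (ha : a ∉ spectrum R D)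
    (C : Matrix ι κ R) :
    IsConj (fromBlocks (a • (1 : Matrix ι ι R)) 0 0 D) (fromBlocks (a • 1) C 0 D) := by
  obtain ⟨u, hu⟩ := spectrum.notMem_iff.1 ha
  obtain ⟨Y, hY⟩ : ∃ Y : Matrix ι κ R, Y * (a • (1 : Matrix κ κ R) - D) = C :=
    ⟨C * u⁻¹.val, by simp [← Algebra.algebraMap_eq_smul_one, ← hu, Matrix.mul_assoc]⟩
  have hunit : IsUnit (fromBlocks (1 : Matrix ι ι R) (-Y) 0 (1 : Matrix κ κ R)) := by simp
  refine ⟨hunit.unit, ?_⟩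
  simp [SemiconjBy, fromBlocks_multiply, ← hY, sub_eq_add_neg, Matrix.mul_add]

theorem det_fromBlocks_smul_one (a : R) (r : Matrix ι κ R) (c : Matrix κ ι R) (S : Matrix κ κ R) :
    (fromBlocks (a • 1) (a • r) c (c * r + S)).det = a ^ Fintype.card ι * S.det := by
  have hfac : fromBlocks (a • 1) (a • r) c (c * r + S) =
      fromBlocks (a • 1) 0 c S * fromBlocks 1 r 0 1 := by
    simp [fromBlocks_multiply]
  simp [hfac]

theorem isConj_fromBlocks_add_smul {c : Matrix κ ι R} {w : Matrix ι κ R} (hwc : w * c = 0) (a s : R)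
    (r : Matrix ι κ R) :
    IsConj (fromBlocks (a • (1 : Matrix ι ι R)) (a • r) c (c * r + s • 1))
      (fromBlocks (a • 1) (a • (r + (s - a) • w)) c
        (c * (r + (s - a) • w) + (s • 1 - s • (c * w)))) := by
  have hunit : IsUnit (fromBlocks (1 : Matrix ι ι R) (a • w) 0 (1 : Matrix κ κ R)) := by simp
  have hwcr : w * (c * r) = 0 := by rw [← Matrix.mul_assoc, hwc, Matrix.zero_mul]
  refine ⟨hunit.unit, ?_⟩
  simp only [SemiconjBy, IsUnit.unit_spec, fromBlocks_multiply]
  congr 1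
  · simp [hwc]
  · simp only [Matrix.mul_add, Matrix.smul_mul, Matrix.mul_smul, hwcr, Matrix.one_mul,
      Matrix.mul_one]
    module
  · simp
  · simp only [Matrix.mul_add, Matrix.mul_smul, Matrix.one_mul, Matrix.mul_one,
      Matrix.zero_mul]
    module

theorem exists_commute_diagonal_det_eq [Nonempty ι] (d : ι → R) (t : Rˣ) :
    ∃ E : (Matrix ι ι R)ˣ, Commute E.val (diagonal d) ∧ E.val.det = t := by
  obtain ⟨i⟩ := ‹Nonempty ι›
  have hdet : (diagonal (Function.update 1 i (t : R))).det = t := by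
    simp [Finset.prod_update_of_mem]
  have hunit : IsUnit (diagonal (Function.update 1 i (t : R))) := by
    rw [isUnit_iff_isUnit_det, hdet]
    exact t.isUnit
  exact ⟨hunit.unit, commute_diagonal _ _, hdet⟩

theorem specialLinearGroup_isConj_of_isConj_diagonal {g h : Matrix.SpecialLinearGroup ι R}
    {d : ι → R} (hg : IsConj (diagonal d) (g : Matrix ι ι R))
    (hh : IsConj (diagonal d) (h : Matrix ι ι R)) :
    IsConj g h := by
  cases isEmpty_or_nonempty ι
  · rw [Subsingleton.elim g h]
  obtain ⟨u, hu⟩ := hg.symm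
  obtain ⟨v, hv⟩ := hh
  obtain ⟨E, hE, hdet⟩ := exists_commute_diagonal_det_eq d (Units.map detMonoidHom (v * u))⁻¹
  let x : Matrix.SpecialLinearGroup ι R := ⟨v * E * u, by
    have hinv := Units.inv_mul (Units.map detMonoidHom (v * u))
    simp only [← hdet, Units.coe_map, Units.val_mul, coe_detMonoidHom,
      det_mul] at hinv ⊢
    linear_combination hinv⟩
  exact ⟨toUnits x, Subtype.ext ((hv.mul_left hE).mul_left hu)⟩

end CommRing

section Field

variable {F : Type*} [Field F]

theorem exists_linearEquiv_apply_eq {ι V : Type*} [Finite ι] [AddCommGroup V] [Module F V]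
    {s t : ι → V} (hs : LinearIndependent F s) (ht : LinearIndependent F t) :
    ∃ e : V ≃ₗ[F] V, ∀ i, e (s i) = t i := by
  have : FiniteDimensional F (Submodule.span F (Set.range s)) :=
    FiniteDimensional.span_of_finite F (Set.finite_range s)
  obtain ⟨e, he⟩ := Submodule.exists_linearEquiv_restrict_eq
    (hs.linearCombinationEquiv.symm ≪≫ₗ ht.linearCombinationEquiv)
  refine ⟨e, fun i => ?_⟩
  have hsi : hs.linearCombinationEquiv (Finsupp.single i 1) =
      ⟨s i, Submodule.subset_span ⟨i, rfl⟩⟩ := by ext; simp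
  have hei := he (hs.linearCombinationEquiv (Finsupp.single i 1))
  rw [LinearEquiv.trans_apply, LinearEquiv.symm_apply_apply, hsi] at hei
  simpa using hei.symm

theorem exists_isConj_apply_eq_smul_add {V : Type*} [AddCommGroup V] [Module F V]
    {f : Module.End F V} (hf : ∀ s : F, f ≠ s • 1) {x y : V} (hxy : LinearIndependent F ![x, y])
    (a : F) : ∃ g : Module.End F V, IsConj f g ∧ g x = a • x + y := by
  obtain ⟨v, hv⟩ : ∃ v, LinearIndependent F ![v, f v] := by
    by_contra! h
    obtain ⟨s, hs⟩ := LinearMap.exists_eq_smul_id_of_forall_notLinearIndependent h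
    exact hf s hs
  have hw : LinearIndependent F ![v, f v - a • v] := by
    rwa [sub_eq_neg_add, ← neg_smul, LinearIndependent.pair_add_smul_right_iff]
  obtain ⟨e, he⟩ := exists_linearEquiv_apply_eq hw hxy
  have hev : e v = x := he 0
  have hew : e (f v - a • v) = y := he 1
  refine ⟨e.conj f, ⟨(LinearMap.GeneralLinearGroup.ofLinearEquiv e), ?_⟩, ?_⟩
  · ext z
    simp [LinearEquiv.conj_apply]
  · rw [LinearEquiv.conj_apply_apply, ← hev, e.symm_apply_apply, hev, ← hew, map_sub, map_smul, hev]
    abel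

variable {ι κ : Type*} [Fintype ι] [DecidableEq ι] [Fintype κ] [DecidableEq κ]

theorem exists_isConj_col_eq {A : Matrix ι ι F} (hA : ∀ s : F, A ≠ s • 1) {i j : ι} (hij : i ≠ j)
    (a : F) : ∃ B : Matrix ι ι F, IsConj A B ∧ B.col i = Pi.single i a + Pi.single j 1 := by
  have hli : LinearIndependent F (![Pi.single i 1, Pi.single j 1] : Fin 2 → ι → F) := by
    rw [LinearIndependent.pair_iff]
    intro s t h
    exact ⟨by simpa [hij] using congrFun h i, by simpa [hij.symm] using congrFun h j⟩
  have hA' (s : F) : toLinAlgEquiv' A ≠ s • 1 := fun h =>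
    hA s (toLinAlgEquiv'.injective (by rw [h, map_smul, map_one]))
  obtain ⟨g, hg, hgi⟩ := exists_isConj_apply_eq_smul_add hA' hli a
  refine ⟨LinearMap.toMatrixAlgEquiv' g, ?_, ?_⟩
  · simpa using (LinearMap.toMatrixAlgEquiv' : _ ≃ₐ[F] Matrix ι ι F).toMonoidHom.map_isConj hg
  · ext k
    simpa [LinearMap.toMatrixAlgEquiv'_apply, Pi.single_apply] using congrFun hgi k

theorem isConj_diagonal_fromBlocks_zero₁₂ {a : F} {d : κ → F} (ha : a ∉ Set.range d)
    {D : Matrix κ κ F} (hD : IsConj (diagonal d) D) (C : Matrix κ ι F) :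
    IsConj (diagonal (Sum.elim (fun _ : ι => a) d)) (fromBlocks (a • 1) 0 C D) := by
  rw [← fromBlocks_diagonal, ← smul_one_eq_diagonal]
  refine (isConj_fromBlocks_zero_zero (.refl _) hD).trans (isConj_fromBlocks_zero₁₂ ?_ C)
  rwa [← spectrum_eq_of_isConj hD, spectrum_diagonal]

theorem isConj_diagonal_fromBlocks_zero₂₁ {a : F} {d : κ → F} (ha : a ∉ Set.range d)
    {D : Matrix κ κ F} (hD : IsConj (diagonal d) D) (C : Matrix ι κ F) :
    IsConj (diagonal (Sum.elim (fun _ : ι => a) d)) (fromBlocks (a • 1) C 0 D) := by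
  rw [← fromBlocks_diagonal, ← smul_one_eq_diagonal]
  refine (isConj_fromBlocks_zero_zero (.refl _) hD).trans (isConj_fromBlocks_zero₂₁ ?_ C)
  rwa [← spectrum_eq_of_isConj hD, spectrum_diagonal]

theorem fromBlocks_mem_conjugatesOf_mul {a b : F} (hb : b ≠ 0) {β γ : κ → F}
    (haβ : a ∉ Set.range β) (hbγ : b ∉ Set.range γ) {S : Matrix κ κ F}
    (hS : S ∈ conjugatesOf (diagonal β) * conjugatesOf (diagonal γ))
    (r : Matrix ι κ F) (c : Matrix κ ι F) :
    fromBlocks ((a * b) • 1) ((a * b) • r) c (c * r + S) ∈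
      conjugatesOf (diagonal (Sum.elim (fun _ : ι => a) β)) *
        conjugatesOf (diagonal (Sum.elim (fun _ : ι => b) γ)) := by
  obtain ⟨B, hB, C, hC, rfl⟩ := hS
  refine ⟨_, isConj_diagonal_fromBlocks_zero₁₂ haβ hB (b⁻¹ • c),
    _, isConj_diagonal_fromBlocks_zero₂₁ hbγ hC (b • r), ?_⟩
  simp [fromBlocks_multiply, smul_smul, hb, mul_comm]

theorem exists_isConj_fromBlocks_single {A : Matrix (Unit ⊕ κ) (Unit ⊕ κ) F}
    (hA : ∀ s : F, A ≠ s • 1) {a : F} (ha : a ≠ 0) (k : κ) :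
    ∃ (r : Matrix Unit κ F) (S : Matrix κ κ F),
      IsConj A (fromBlocks (a • 1) (a • r) (single k () 1) (single k () (1 : F) * r + S)) := by
  obtain ⟨B, hAB, hB⟩ := exists_isConj_col_eq hA (Sum.inl_ne_inr (a := ()) (b := k)) a
  refine ⟨a⁻¹ • B.toBlocks₁₂, B.toBlocks₂₂ - single k () (1 : F) * (a⁻¹ • B.toBlocks₁₂), ?_⟩
  have h₁₁ : B.toBlocks₁₁ = a • 1 := by
    ext
    simpa [toBlocks₁₁] using congrFun hB (.inl ())
  have h₂₁ : B.toBlocks₂₁ = single k () 1 := by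
    ext i
    simpa [toBlocks₂₁, Pi.single_apply, single_apply, eq_comm (a := i)] using congrFun hB (.inr i)
  rwa [add_sub_cancel, smul_inv_smul₀ ha, ← h₁₁, ← h₂₁, fromBlocks_toBlocks]

theorem exists_isConj_fromBlocks_of_ne_smul_one [Nonempty κ] {A : Matrix (Unit ⊕ κ) (Unit ⊕ κ) F}
    (hA : ∀ s : F, A ≠ s • 1) (hdet : A.det ≠ 0) {a : F} (ha : a ≠ 0) :
    ∃ (r : Matrix Unit κ F) (c : Matrix κ Unit F) (S : Matrix κ κ F),
      IsConj A (fromBlocks (a • 1) (a • r) c (c * r + S)) ∧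
        (Nontrivial κ → ∀ s : F, S ≠ s • 1) := by
  obtain ⟨k⟩ := ‹Nonempty κ›
  obtain ⟨r, S, hAS⟩ := exists_isConj_fromBlocks_single hA ha k
  by_cases hS : Nontrivial κ → ∀ s : F, S ≠ s • 1
  · exact ⟨r, _, S, hAS, hS⟩
  push Not at hS
  obtain ⟨_, s, rfl⟩ := hS
  have hs : s ≠ 0 := by
    rintro rfl
    apply hdet
    rw [det_eq_of_isConj hAS, det_fromBlocks_smul_one]
    simp
  obtain ⟨l, hl⟩ := exists_ne k
  have hwc : (single () l 1 : Matrix Unit κ F) * (single k () 1 : Matrix κ Unit F) = 0 :=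
    single_mul_single_of_ne _ _ _ _ hl _
  refine ⟨_, _, _, hAS.trans (isConj_fromBlocks_add_smul hwc a s r), fun _ t ht => hs ?_⟩
  simpa [hl.symm] using congrFun₂ ht k l

theorem mem_conjugatesOf_diagonal_mul_of_forall_schur [Nonempty κ]
    {A : Matrix (Unit ⊕ κ) (Unit ⊕ κ) F} {β γ : Unit ⊕ κ → F}
    (hβ : β (.inl ()) ∉ Set.range (β ∘ .inr)) (hγ : γ (.inl ()) ∉ Set.range (γ ∘ .inr))
    (hdet : A.det = (∏ i, β i) * ∏ i, γ i) (hdet0 : A.det ≠ 0) (hA : ∀ s : F, A ≠ s • 1)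
    (hschur : ∀ S : Matrix κ κ F, S.det = (∏ k, β (.inr k)) * ∏ k, γ (.inr k) → S.det ≠ 0 →
      (Nontrivial κ → ∀ s : F, S ≠ s • 1) →
      S ∈ conjugatesOf (diagonal (β ∘ .inr)) * conjugatesOf (diagonal (γ ∘ .inr))) :
    A ∈ conjugatesOf (diagonal β) * conjugatesOf (diagonal γ) := by
  have hprod : A.det = β (.inl ()) * γ (.inl ()) *
      ((∏ k, β (.inr k)) * ∏ k, γ (.inr k)) := by
    simp only [hdet, Fintype.prod_sum_type, Finset.univ_unique, Finset.prod_singleton]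
    ring
  have hcorner : β (.inl ()) * γ (.inl ()) ≠ 0 := left_ne_zero_of_mul (hprod ▸ hdet0)
  obtain ⟨r, c, S, hAS, hS⟩ := exists_isConj_fromBlocks_of_ne_smul_one hA hdet0 hcorner
  have hdetS : A.det = β (.inl ()) * γ (.inl ()) * S.det := by
    simp [det_eq_of_isConj hAS, det_fromBlocks_smul_one]
  have hSmem := hschur S (mul_left_cancel₀ hcorner (hdetS.symm.trans hprod))
    (right_ne_zero_of_mul (hdetS ▸ hdet0)) hS
  have helim (d : Unit ⊕ κ → F) : Sum.elim (fun _ => d (.inl ())) (d ∘ .inr) = d :=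
    Sum.elim_comp_inl_inr d
  have hmem := fromBlocks_mem_conjugatesOf_mul (ι := Unit) (right_ne_zero_of_mul hcorner)
    hβ hγ hSmem r c
  rw [helim, helim] at hmem
  exact mem_conjugatesOf_mul_of_isConj hAS.symm hmem

theorem mem_conjugatesOf_diagonal_mul {ι : Type*} [Fintype ι] [DecidableEq ι] {A : Matrix ι ι F}
    {β γ : ι → F} (hβ : Function.Injective β) (hγ : Function.Injective γ)
    (hdet : A.det = (∏ i, β i) * ∏ i, γ i) (hdet0 : A.det ≠ 0)
    (hA : Nontrivial ι → ∀ s : F, A ≠ s • 1) :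
    A ∈ conjugatesOf (diagonal β) * conjugatesOf (diagonal γ) := by
  rcases subsingleton_or_nontrivial ι with _ | hι
  · refine ⟨_, mem_conjugatesOf_self, _, mem_conjugatesOf_self, ?_⟩
    ext i j
    obtain rfl := Subsingleton.elim i j
    simpa [det_eq_elem_of_subsingleton _ i, Fintype.prod_subsingleton _ i] using hdet.symm
  obtain ⟨i, j, hij⟩ := exists_pair_ne ι
  have : Nonempty {k // k ≠ i} := ⟨j, hij.symm⟩
  let e : Unit ⊕ {k // k ≠ i} ≃ ι :=
    (Equiv.sumComm _ _).trans ((Equiv.optionEquivSumPUnit _).symm.trans (Equiv.optionSubtypeNe i))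
  have hAe (s : F) : A.submatrix e e ≠ s • 1 := fun h =>
    hA hι s ((reindexAlgEquiv F F e.symm).injective (by simpa using h))
  suffices A.submatrix e e ∈ conjugatesOf (diagonal (β ∘ e)) * conjugatesOf (diagonal (γ ∘ e)) by
    simpa [Function.comp_assoc] using
      map_mem_conjugatesOf_mul (reindexAlgEquiv F F e).toMonoidHom this
  have hnotMem {d : ι → F} (hd : Function.Injective d) :
      (d ∘ e) (.inl ()) ∉ Set.range ((d ∘ e) ∘ .inr) := by
    rintro ⟨k, hk⟩
    exact Sum.inr_ne_inl (e.injective (hd hk))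
  refine mem_conjugatesOf_diagonal_mul_of_forall_schur (hnotMem hβ) (hnotMem hγ)
    ?_ (by simpa using hdet0) hAe fun S => mem_conjugatesOf_diagonal_mul
      ((hβ.comp e.injective).comp Sum.inr_injective) ((hγ.comp e.injective).comp Sum.inr_injective)
  simpa only [det_submatrix_equiv_self, Function.comp_apply, e.prod_comp] using hdet
termination_by Fintype.card ι
decreasing_by exact Fintype.card_subtype_lt (x := i) (by simp)

end Field

theorem noncentral_mem_conjClass_mul_general {ι F : Type*} [Fintype ι] [DecidableEq ι] [Field F]
    {a b : Matrix.SpecialLinearGroup ι F} {da db : ι → F}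
    (ha : IsConj (diagonal da) (a : Matrix ι ι F)) (hb : IsConj (diagonal db) (b : Matrix ι ι F))
    (hda : Function.Injective da) (hdb : Function.Injective db)
    {g : Matrix.SpecialLinearGroup ι F} (hg : g ∉ Subgroup.center (Matrix.SpecialLinearGroup ι F)) :
    g ∈ conjugatesOf a * conjugatesOf b := by
  have ha1 : ∏ i, da i = 1 := by rw [← det_diagonal, det_eq_of_isConj ha, a.det_coe]
  have hb1 : ∏ i, db i = 1 := by rw [← det_diagonal, det_eq_of_isConj hb, b.det_coe]
  have hg_ne (s : F) : (g : Matrix ι ι F) ≠ s • 1 := fun hs =>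
    hg (Matrix.SpecialLinearGroup.mem_center_iff.2
      ⟨s, by simpa [hs] using g.det_coe, by rw [hs, smul_one_eq_diagonal, scalar_apply]⟩)
  obtain ⟨B, hB, C, hC, hBC⟩ := mem_conjugatesOf_diagonal_mul hda hdb
    (by rw [g.det_coe, ha1, hb1, one_mul]) (by simp) fun _ => hg_ne
  let B' : Matrix.SpecialLinearGroup ι F := ⟨B, by rw [← det_eq_of_isConj hB, det_diagonal, ha1]⟩
  let C' : Matrix.SpecialLinearGroup ι F := ⟨C, by rw [← det_eq_of_isConj hC, det_diagonal, hb1]⟩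
  exact ⟨B', specialLinearGroup_isConj_of_isConj_diagonal ha hB,
    C', specialLinearGroup_isConj_of_isConj_diagonal hb hC, Subtype.ext hBC⟩

/-- Ellers–Gordeev: if `a, b ∈ SL_n(F)` are diagonal with pairwise distinct diagonal entries
(split regular semisimple), then every noncentral element of `SL_n(F)` lies in the product of
the conjugacy classes of `a` and `b`. -/
theorem noncentral_mem_conjClass_mul {F : Type*} [Field F] (n : ℕ) (hn : 2 ≤ n)
    (a b : Matrix.SpecialLinearGroup (Fin n) F) (da db : Fin n → F)
    (ha : (a : Matrix (Fin n) (Fin n) F) = Matrix.diagonal da)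
    (hb : (b : Matrix (Fin n) (Fin n) F) = Matrix.diagonal db)
    (hda : Function.Injective da) (hdb : Function.Injective db) :
    ∀ g : Matrix.SpecialLinearGroup (Fin n) F,
      g ∉ Subgroup.center (Matrix.SpecialLinearGroup (Fin n) F) →
      ∃ x y : Matrix.SpecialLinearGroup (Fin n) F, g = (x * a * x⁻¹) * (y * b * y⁻¹) := by
  intro g hg
  have hprod := noncentral_mem_conjClass_mul_general (by rw [ha]) (by rw [hb]) hda hdb hg
  simpa [Set.mem_mul, conjugatesOf, isConj_iff, eq_comm] using hprod
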